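/- Let η : ℝ → ℝ be smooth and compactly supported. For every s ∈ ℝ and all b, b' with -1/2 < b' ≤ b < 1/2, there exists C > 0 (depending on η, s, b, b') such that for every τ ∈ (0,1], every integer N ≥ 1 with T := Nτ ≤ 1, and every sequence (u_n)_{n∈ℤ} of functions in H^s(𝕋) with only finitely many nonzero terms, ‖(η(nτ/T) u_n)_{n∈ℤ}‖_{X^{s,b'}_τ} ≤ C T^{b-b'} ‖(u_n)‖_{X^{s,b}_τ}. -/

import Mathlib

noncomputable section

open MeasureTheory Complex Filter Topology AddCircle
open scoped ENNReal

abbrev Torus := AddCircle (2 * Real.pi)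

instance : Fact (0 < 2 * Real.pi) := ⟨by positivity⟩

/-- Japanese bracket `⟨x⟩ = (1+|x|²)^{1/2}`. -/
def jbr (x : ℝ) : ℝ := Real.sqrt (1 + x ^ 2)

/-- The Sobolev `H^s` norm on the torus, via Fourier coefficients. -/
def hsNorm (s : ℝ) (f : Torus → ℂ) : ℝ :=
  Real.sqrt (∑' k : ℤ, jbr k ^ (2 * s) * ‖fourierCoeff f k‖ ^ 2)

/-- Membership in `H^s(𝕋)` (as a function): square integrable with finite `H^s` norm. -/
def InHs (s : ℝ) (f : Torus → ℂ) : Prop :=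
  MemLp f 2 haarAddCircle ∧ Summable fun k : ℤ => jbr k ^ (2 * s) * ‖fourierCoeff f k‖ ^ 2

/-- The frequency cutoff `Π_τ`, keeping the Fourier modes `|k| ≤ τ^{-1/2}`. -/
def projC (τ : ℝ) (f : Torus → ℂ) : Torus → ℂ := fun x =>
  ∑' k : ℤ, if |(k : ℝ)| ≤ τ ^ (-(1 : ℝ) / 2) then fourierCoeff f k * fourier k x else 0

/-- The free Schrödinger group `e^{it∂_x²}`, given by the Fourier multiplier `e^{-itk²}`. -/
def schrod (t : ℝ) (f : Torus → ℂ) : Torus → ℂ := fun x =>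
  ∑' k : ℤ, Complex.exp (-Complex.I * t * (k : ℂ) ^ 2) * fourierCoeff f k * fourier k x

/-- Continuity on `I` with values in `L²(𝕋)`. -/
def ContL2On (I : Set ℝ) (u : ℝ → Torus → ℂ) : Prop :=
  (∀ t ∈ I, MemLp (u t) 2 haarAddCircle) ∧
  ∀ t ∈ I, Tendsto (fun t' => eLpNorm (u t' - u t) 2 haarAddCircle) (nhdsWithin t I) (nhds 0)

/-- Continuity on `I` with values in `H^s(𝕋)`. -/
def ContHsOn (s : ℝ) (I : Set ℝ) (u : ℝ → Torus → ℂ) : Prop :=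
  (∀ t ∈ I, InHs s (u t)) ∧
  ∀ t ∈ I, Tendsto (fun t' => hsNorm s (u t' - u t)) (nhdsWithin t I) (nhds 0)

/-- The cubic nonlinearity `|f|² f` (pointwise). -/
def cubic (f : Torus → ℂ) : Torus → ℂ := fun x => (‖f x‖ : ℂ) ^ 2 * f x

/-- The filtered cubic nonlinearity `Π_τ(|Π_τ f|² Π_τ f)`. -/
def projCubic (τ : ℝ) (f : Torus → ℂ) : Torus → ℂ := projC τ (cubic (projC τ f))

/-- `v` is the (global-in-time) mild solution of the projected equation
`i∂_t v = -∂_x² v - μ Π_τ(|Π_τ v|² Π_τ v)`, `v(0) = Π_τ u₀`. -/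
def IsProjSolution (μ τ : ℝ) (u₀ : Torus → ℂ) (v : ℝ → Torus → ℂ) : Prop :=
  ContL2On Set.univ v ∧
  ∀ t : ℝ, ∀ x : Torus,
    v t x = schrod t (projC τ u₀) x
      + Complex.I * μ * ∫ s in (0 : ℝ)..t, schrod (t - s) (projCubic τ (v s)) x

/-- The cubic NLS `i∂_t u = -∂_x² u - μ |u|² u` holds in the sense of space-time
distributions on `(0,T) × 𝕋` (tested against `ψ(t) e^{-ikx}`). -/
def DistribSolOn (μ T : ℝ) (u : ℝ → Torus → ℂ) : Prop :=
  ∀ k : ℤ, ∀ ψ : ℝ → ℂ, ContDiff ℝ (⊤ : ℕ∞) ψ → tsupport ψ ⊆ Set.Ioo 0 T →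
    -Complex.I * ∫ t : ℝ, deriv ψ t * fourierCoeff (u t) k
      = (k : ℂ) ^ 2 * ∫ t : ℝ, ψ t * fourierCoeff (u t) k
        - (μ : ℂ) * ∫ t : ℝ, ψ t * fourierCoeff (cubic (u t)) k

/-- `u ∈ L⁴((0,T) × 𝕋)`. -/
def SpaceTimeL4 (T : ℝ) (u : ℝ → Torus → ℂ) : Prop :=
  MemLp (fun p : ℝ × Torus => u p.1 p.2) 4
    ((volume.restrict (Set.Ioo 0 T)).prod haarAddCircle)

/-- Space-time Fourier transform `ṽ(σ,k)` of `v : ℝ × 𝕋 → ℂ`. -/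
def stFT (v : ℝ → Torus → ℂ) (σ : ℝ) (k : ℤ) : ℂ :=
  ∫ t : ℝ, Complex.exp (-Complex.I * σ * t) * fourierCoeff (v t) k

/-- The (continuous) Bourgain `X^{s,b}` norm, valued in `ℝ≥0∞`. -/
def XcNorm (s b : ℝ) (v : ℝ → Torus → ℂ) : ℝ≥0∞ :=
  (∫⁻ σ : ℝ, ∑' k : ℤ,
      ENNReal.ofReal ((1 + |(k : ℝ)|) ^ (2 * s) * (1 + |σ + (k : ℝ) ^ 2|) ^ (2 * b)
        * ‖stFT v σ k‖ ^ 2)) ^ (1 / 2 : ℝ)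

/-- The restriction norm `‖u‖_{X^{s,b}(T)}` is bounded by `M`: some extension of `u`
from `(0,T)` has `X^{s,b}` norm at most `M`. -/
def XresBounded (s b T : ℝ) (u : ℝ → Torus → ℂ) (M : ℝ≥0∞) : Prop :=
  ∃ v : ℝ → Torus → ℂ, (∀ t ∈ Set.Ioo 0 T, v t = u t) ∧ XcNorm s b v ≤ M

/-- `u` is a Bourgain-class solution of cubic NLS on `[0,T]` with datum `u₀`. -/
def IsNLSSolution (μ T : ℝ) (u₀ : Torus → ℂ) (u : ℝ → Torus → ℂ) : Prop :=
  ContL2On (Set.Icc 0 T) u ∧ SpaceTimeL4 T u ∧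
  (∃ b ∈ Set.Ioo (1 / 2 : ℝ) (5 / 8 : ℝ), ∃ v : ℝ → Torus → ℂ,
      (∀ t ∈ Set.Ioo 0 T, v t = u t) ∧ XcNorm 0 b v < ⊤) ∧
  u 0 = u₀ ∧ DistribSolOn μ T u

/-- One step of the pointwise nonlinear flow `e^{iμτ|Π_τ f|²} Π_τ f`. -/
def lieFlow (μ τ : ℝ) (f : Torus → ℂ) : Torus → ℂ := fun x =>
  Complex.exp (Complex.I * μ * τ * (‖projC τ f x‖ : ℂ) ^ 2) * projC τ f x

/-- The filtered Lie splitting scheme `u⁰ = Π_τ u₀`,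
`u^{n+1} = e^{iτ∂_x²} Π_τ (e^{iμτ|Π_τ uⁿ|²} Π_τ uⁿ)`. -/
def lieScheme (μ τ : ℝ) (u₀ : Torus → ℂ) : ℕ → Torus → ℂ
  | 0 => projC τ u₀
  | n + 1 => schrod τ (projC τ (lieFlow μ τ (lieScheme μ τ u₀ n)))

/-- `d_τ(σ) = (e^{iτσ}-1)/τ`. -/
def dtau (τ σ : ℝ) : ℂ := (Complex.exp (Complex.I * τ * σ) - 1) / τ

/-- The discrete Bourgain `X^{s,b}_τ` norm of a sequence of functions on the torus. -/
def XdNorm (τ s b : ℝ) (u : ℤ → Torus → ℂ) : ℝ :=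
  Real.sqrt (∫ σ in Set.Ioc (-(Real.pi / τ)) (Real.pi / τ),
    ∑' k : ℤ, jbr k ^ (2 * s) * jbr ‖dtau τ (σ - (k : ℝ) ^ 2)‖ ^ (2 * b) *
      ‖(τ : ℂ) * ∑' m : ℤ, fourierCoeff (u m) k * Complex.exp (Complex.I * m * τ * σ)‖ ^ 2)

/-- The discrete space-time Lebesgue norm `‖(u_n)‖_{ℓ^p_τ L^q}`. -/
def lpLqNorm (τ p q : ℝ) (u : ℤ → Torus → ℂ) : ℝ :=
  (τ * ∑' n : ℤ, (eLpNorm (u n) (ENNReal.ofReal q) haarAddCircle).toReal ^ p) ^ (1 / p)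

/-!
For each spatial frequency `k` the claim is a weighted `L²` bound in the time frequency, in which
multiplication by `η(m/L)`, `L = T/τ`, is convolution with `K(x) = ∑ₘ η(m/L) e^{imx}`. Two
summations by parts give `|K| ≲ L M⁻²` with `M(x) = 1 + L |e^{ix} - 1|`. After the change of
variables `x = τ(σ - k²)` the rescaled weight `V = T ⟨d_τ⟩` satisfies `L |e^{ix} - 1| ≤ V ≤ M`.
Peetre's inequality moves `M ^ b` across the kernel at the cost of a factor `M ^ |b|`, which the
decay of `K` absorbs. Schur's test with the weight `(M / V) ^ r`, `r = max (2b) (-2b')`, passes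
between `V` and `M`: this weight is at most `1 + |Lx| ^ (-r)` up to constants, and since `r < 1`
its singularity is integrable at the scale `1/L` of the kernel.
-/

open Function Set
open scoped Real

/-- The trigonometric series `∑ₘ aₘ e^{imx}` with coefficient sequence `a`. The space-time Fourier
transform `ũ(σ, k)` is `τ` times this series at `x = τσ` for `aₘ = ûₘ(k)`. -/
def trigSum (a : ℤ → ℂ) (x : ℝ) : ℂ := ∑' m : ℤ, a m * exp (I * m * x)

lemma norm_exp_I_mul_intCast_mul (m : ℤ) (x : ℝ) : ‖exp (I * m * x)‖ = 1 := by
  simpa [mul_assoc] using norm_exp_I_mul_ofReal (m * x)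

section TrigSum

variable {a c : ℤ → ℂ}

lemma trigSum_eq_sum {F : Finset ℤ} (ha : support a ⊆ F) (x : ℝ) :
    trigSum a x = ∑ m ∈ F, a m * exp (I * m * x) :=
  tsum_eq_sum fun m hm => by rw [notMem_support.1 fun h => hm (ha h), zero_mul]

lemma continuous_trigSum (ha : a.HasFiniteSupport) : Continuous (trigSum a) := by
  rw [funext (trigSum_eq_sum (F := Set.Finite.toFinset ha) (Set.Finite.coe_toFinset ha).ge)]
  fun_prop

lemma trigSum_periodic (a : ℤ → ℂ) : Periodic (trigSum a) (2 * π) := fun x =>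
  tsum_congr fun m => by
    congr 1
    exact exp_eq_exp_iff_exists_int.2 ⟨m, by push_cast; ring⟩

lemma trigSum_mul_exp (a : ℤ → ℂ) (x y : ℝ) :
    trigSum (fun m => a m * exp (I * m * y)) x = trigSum a (x + y) :=
  tsum_congr fun m => by
    rw [mul_assoc, ← exp_add]
    push_cast
    ring_nf

lemma summable_trigSum (ha : a.HasFiniteSupport) (x : ℝ) :
    Summable fun m : ℤ => a m * exp (I * m * x) :=
  summable_of_hasFiniteSupport (ha.mul_left fun m : ℤ => exp (I * m * x))

lemma norm_trigSum_le {F : Finset ℤ} (ha : support a ⊆ F) (x : ℝ) :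
    ‖trigSum a x‖ ≤ ∑ m ∈ F, ‖a m‖ := by
  rw [trigSum_eq_sum ha]
  exact norm_sum_le_of_le _ fun m _ => by rw [norm_mul, norm_exp_I_mul_intCast_mul, mul_one]

lemma exp_sub_one_mul_trigSum (ha : a.HasFiniteSupport) (x : ℝ) :
    (exp (I * x) - 1) * trigSum a x = trigSum (fun m => a (m - 1) - a m) x := by
  have hshift : (fun m => a (m - 1)).HasFiniteSupport :=
    Set.Finite.preimage (Equiv.subRight (1 : ℤ)).injective.injOn ha
  have hexp : exp (I * x) * trigSum a x = trigSum (fun m => a (m - 1)) x := by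
    rw [trigSum, trigSum, ← tsum_mul_left,
      ← (Equiv.addRight (1 : ℤ)).tsum_eq fun m => a (m - 1) * exp (I * m * x)]
    refine tsum_congr fun m => ?_
    rw [Equiv.coe_addRight, add_sub_cancel_right, mul_left_comm, ← exp_add]
    push_cast
    ring_nf
  rw [sub_mul, one_mul, hexp, trigSum, trigSum,
    ← (summable_trigSum hshift x).tsum_sub (summable_trigSum ha x)]
  simp only [trigSum, sub_mul]

lemma integral_exp_I_mul_intCast_mul (j : ℤ) :
    ∫ z in (-π)..π, exp (I * j * z) = if j = 0 then (2 * π : ℂ) else 0 := by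
  split_ifs with hj
  · simp [hj, two_mul]
  · have hperiod : exp (I * j * π) = exp (I * j * (-π : ℝ)) :=
      exp_eq_exp_iff_exists_int.2 ⟨j, by push_cast; ring⟩
    rw [integral_exp_mul_complex (mul_ne_zero I_ne_zero (by exact_mod_cast hj)), hperiod,
      sub_self, zero_div]

lemma integral_trigSum_sub_mul_trigSum (ha : a.HasFiniteSupport) (hc : c.HasFiniteSupport)
    (y : ℝ) :
    ∫ z in (-π)..π, trigSum a (y - z) * trigSum c z = 2 * π * trigSum (fun m => a m * c m) y := by
  obtain ⟨F, hF⟩ := (Set.Finite.union ha hc).exists_finset_coe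
  have haF : support a ⊆ F := hF ▸ subset_union_left
  have hcF : support c ⊆ F := hF ▸ subset_union_right
  have expand (z : ℝ) : trigSum a (y - z) * trigSum c z =
      ∑ m ∈ F, ∑ j ∈ F, a m * c j * exp (I * m * y) * exp (I * (j - m : ℤ) * z) := by
    rw [trigSum_eq_sum haF, trigSum_eq_sum hcF, Finset.sum_mul_sum]
    refine Finset.sum_congr rfl fun m _ => Finset.sum_congr rfl fun j _ => ?_
    rw [mul_mul_mul_comm, mul_assoc (a m * c j), ← exp_add, ← exp_add]
    push_cast
    ring_nf
  simp_rw [expand]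
  rw [trigSum_eq_sum ((support_mul_subset_left a c).trans haF), Finset.mul_sum,
    intervalIntegral.integral_finsetSum
      fun m _ => Continuous.intervalIntegrable (by fun_prop) _ _]
  refine Finset.sum_congr rfl fun m hm => ?_
  rw [intervalIntegral.integral_finsetSum
    fun j _ => Continuous.intervalIntegrable (by fun_prop) _ _]
  simp_rw [intervalIntegral.integral_const_mul, integral_exp_I_mul_intCast_mul, sub_eq_zero,
    mul_ite, mul_zero]
  rw [Finset.sum_ite_eq' F m, if_pos hm]
  ring

lemma enorm_trigSum_mul_le (ha : a.HasFiniteSupport) (hc : c.HasFiniteSupport) (y : ℝ) :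
    ‖trigSum (fun m => a m * c m) y‖ₑ ≤
      ∫⁻ z in Ioc (-π) π, ‖trigSum a (y - z)‖ₑ * ‖trigSum c z‖ₑ := by
  have hconv := integral_trigSum_sub_mul_trigSum ha hc y
  rw [intervalIntegral.integral_of_le (by linarith [Real.pi_pos])] at hconv
  have hone : 1 ≤ ‖(2 * π : ℂ)‖ₑ := by
    rw [← ofReal_norm, ENNReal.one_le_ofReal, norm_mul, norm_real, Complex.norm_two,
      Real.norm_of_nonneg Real.pi_pos.le]
    linarith [Real.pi_gt_three]
  calc ‖trigSum (fun m => a m * c m) y‖ₑ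
      ≤ ‖(2 * π : ℂ)‖ₑ * ‖trigSum (fun m => a m * c m) y‖ₑ := le_mul_of_one_le_left' hone
    _ = ‖∫ z in Ioc (-π) π, trigSum a (y - z) * trigSum c z‖ₑ := by
      rw [← enorm_mul, hconv]
    _ ≤ ∫⁻ z in Ioc (-π) π, ‖trigSum a (y - z)‖ₑ * ‖trigSum c z‖ₑ := by
      simpa only [enorm_mul] using enorm_integral_le_lintegral_enorm
        (fun z => trigSum a (y - z) * trigSum c z) (μ := volume.restrict (Ioc (-π) π))

end TrigSum

/-- The chord length `|e^{ix} - 1|`, a `2π`-periodic distance from `x` to `0`;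
`‖d_τ(σ)‖ = chord (τσ) / τ`. -/
def chord (x : ℝ) : ℝ := ‖exp (I * x) - 1‖

section Chord

lemma chord_nonneg (x : ℝ) : 0 ≤ chord x := norm_nonneg _

@[fun_prop]
lemma continuous_chord : Continuous chord := by
  unfold chord
  fun_prop

lemma chord_eq (x : ℝ) : chord x = 2 * |Real.sin (x / 2)| := by
  rw [chord, norm_exp_I_mul_ofReal_sub_one, norm_mul, Real.norm_two, Real.norm_eq_abs]

lemma chord_neg (x : ℝ) : chord (-x) = chord x := by
  rw [chord_eq, chord_eq, neg_div, Real.sin_neg, abs_neg]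

lemma chord_periodic : Periodic chord (2 * π) := fun x => by
  rw [chord_eq, chord_eq, add_div, mul_div_cancel_left₀ π two_ne_zero, Real.sin_add_pi, abs_neg]

lemma chord_le_two (x : ℝ) : chord x ≤ 2 := by
  rw [chord_eq]
  linarith [Real.abs_sin_le_one (x / 2)]

lemma chord_add_le (x y : ℝ) : chord (x + y) ≤ chord x + chord y := by
  have hsplit : exp (I * (x + y : ℝ)) - 1 =
      (exp (I * x) - 1) + exp (I * x) * (exp (I * y) - 1) := by
    rw [ofReal_add, mul_add, exp_add]
    ring
  calc chord (x + y) ≤ ‖exp (I * x) - 1‖ + ‖exp (I * x) * (exp (I * y) - 1)‖ := by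
        rw [chord, hsplit]
        exact norm_add_le _ _
    _ = chord x + chord y := by rw [norm_mul, norm_exp_I_mul_ofReal, one_mul, chord, chord]

lemma mul_abs_le_chord {x : ℝ} (hx : |x| ≤ π) : 2 / π * |x| ≤ chord x := by
  have hsin := Real.mul_abs_le_abs_sin (x := x / 2) (by rw [abs_div, abs_two]; linarith)
  rw [abs_div, abs_two] at hsin
  rw [chord_eq]
  linarith

end Chord

lemma rpow_le_rpow_mul_rpow_abs {x y c : ℝ} (hx : 0 < x) (hy : 0 < y) (hc : 0 < c)
    (hxy : x ≤ y * c) (hyx : y ≤ x * c) (b : ℝ) : x ^ b ≤ y ^ b * c ^ |b| := by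
  rcases le_total 0 b with hb | hb
  · rw [abs_of_nonneg hb, ← Real.mul_rpow hy.le hc.le]
    exact Real.rpow_le_rpow hx.le hxy hb
  · rw [abs_of_nonpos hb, Real.rpow_neg hc.le, ← div_eq_mul_inv, ← Real.div_rpow hy.le hc.le]
    exact Real.rpow_le_rpow_of_nonpos (div_pos hy hc) ((div_le_iff₀ hc).2 hyx) hb

/-- The bracket `1 + L |e^{ix} - 1|` at frequency scale `1/L`, the submultiplicative model of the
weight `T ⟨d_τ⟩` when `L = T/τ`. -/
def chordBracket (L x : ℝ) : ℝ := 1 + L * chord x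

section ChordBracket

variable {L : ℝ}

lemma one_le_chordBracket (hL : 0 ≤ L) (x : ℝ) : 1 ≤ chordBracket L x :=
  le_add_of_nonneg_right (mul_nonneg hL (chord_nonneg x))

lemma chordBracket_pos (hL : 0 ≤ L) (x : ℝ) : 0 < chordBracket L x :=
  one_pos.trans_le (one_le_chordBracket hL x)

@[fun_prop]
lemma continuous_chordBracket (L : ℝ) : Continuous (chordBracket L) := by
  unfold chordBracket
  fun_prop

lemma continuous_chordBracket_rpow (hL : 0 ≤ L) (p : ℝ) :
    Continuous fun x => chordBracket L x ^ p :=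
  (continuous_chordBracket L).rpow_const fun x => Or.inl (chordBracket_pos hL x).ne'

lemma chordBracket_neg (L x : ℝ) : chordBracket L (-x) = chordBracket L x := by
  rw [chordBracket, chordBracket, chord_neg]

lemma chordBracket_periodic (L : ℝ) : Periodic (chordBracket L) (2 * π) := fun x => by
  rw [chordBracket, chordBracket, chord_periodic]

lemma chordBracket_add_le (hL : 0 ≤ L) (x y : ℝ) :
    chordBracket L (x + y) ≤ chordBracket L x * chordBracket L y :=
  calc chordBracket L (x + y) ≤ 1 + L * (chord x + chord y) := by
        unfold chordBracket
        gcongr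
        exact chord_add_le x y
    _ ≤ 1 + L * (chord x + chord y) + L * chord x * (L * chord y) :=
        le_add_of_nonneg_right (mul_nonneg (mul_nonneg hL (chord_nonneg x))
          (mul_nonneg hL (chord_nonneg y)))
    _ = chordBracket L x * chordBracket L y := by
        unfold chordBracket
        ring

lemma chordBracket_rpow_le (hL : 0 ≤ L) (b y z : ℝ) :
    chordBracket L y ^ b ≤ chordBracket L z ^ b * chordBracket L (y - z) ^ |b| := by
  refine rpow_le_rpow_mul_rpow_abs (chordBracket_pos hL y) (chordBracket_pos hL z)
    (chordBracket_pos hL _) ?_ ?_ b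
  · simpa only [add_sub_cancel] using chordBracket_add_le hL z (y - z)
  · rw [← chordBracket_neg L (y - z), neg_sub]
    simpa only [add_sub_cancel] using chordBracket_add_le hL y (z - y)

lemma one_add_abs_le_chordBracket (hL : 0 ≤ L) {x : ℝ} (hx : |x| ≤ π) :
    1 + |2 / π * L * x| ≤ chordBracket L x := by
  have habs : |2 / π * L * x| = L * (2 / π * |x|) := by
    rw [abs_mul, abs_of_nonneg (by positivity)]
    ring
  rw [habs, chordBracket]
  gcongr
  exact mul_abs_le_chord hx

end ChordBracket

section KernelDecay

variable {L A B : ℝ} {g : ℝ → ℂ}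

lemma support_intCast_div_subset (hL : 0 < L) (hg : ∀ t, A < |t| → g t = 0) :
    support (fun m : ℤ => g (m / L)) ⊆ Finset.Icc (-⌊A * L⌋) ⌊A * L⌋ := by
  intro m hm
  have hA : |(m / L : ℝ)| ≤ A := not_lt.1 fun h => hm (hg _ h)
  rw [abs_div, abs_of_pos hL, div_le_iff₀ hL] at hA
  rw [Finset.coe_Icc, mem_Icc, ← abs_le, Int.le_floor]
  exact_mod_cast hA

lemma hasFiniteSupport_intCast_div (hL : 0 < L) (hg : ∀ t, A < |t| → g t = 0) :
    (fun m : ℤ => g (m / L)).HasFiniteSupport :=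
  (Finset.finite_toSet _).subset (support_intCast_div_subset hL hg)

lemma norm_trigSum_intCast_div_le (hL : 1 ≤ L) (hA : 0 ≤ A) (hg : ∀ t, A < |t| → g t = 0)
    (hB : ∀ t, ‖g t‖ ≤ B) (x : ℝ) :
    ‖trigSum (fun m => g (m / L)) x‖ ≤ (2 * A + 1) * L * B := by
  have hB0 : 0 ≤ B := (norm_nonneg _).trans (hB 0)
  have hfloor : 0 ≤ ⌊A * L⌋ := Int.floor_nonneg.2 (by positivity)
  calc ‖trigSum (fun m => g (m / L)) x‖
      ≤ ∑ m ∈ Finset.Icc (-⌊A * L⌋) ⌊A * L⌋, ‖g (m / L)‖ :=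
        norm_trigSum_le (support_intCast_div_subset (one_pos.trans_le hL) hg) x
    _ ≤ (Finset.Icc (-⌊A * L⌋) ⌊A * L⌋).card • B := Finset.sum_le_card_nsmul _ _ _ fun m _ => hB _
    _ = (2 * ⌊A * L⌋ + 1) * B := by
        have hcard : ((Finset.Icc (-⌊A * L⌋) ⌊A * L⌋).card : ℤ) = 2 * ⌊A * L⌋ + 1 := by
          rw [Int.card_Icc]
          omega
        rw [nsmul_eq_mul, ← Int.cast_natCast, hcard]
        push_cast
        rfl
    _ ≤ (2 * A + 1) * L * B := by
        gcongr
        linarith [Int.floor_le (A * L)]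

lemma norm_iteratedDeriv_sub_le {n : ℕ} (hg : ContDiff ℝ (n + 1) g)
    (hB : ∀ t, ‖iteratedDeriv (n + 1) g t‖ ≤ B) (h t : ℝ) :
    ‖iteratedDeriv n (fun x => g (x - h) - g x) t‖ ≤ B * |h| := by
  have hgn : ContDiff ℝ n g := hg.of_le (by exact_mod_cast Nat.le_succ n)
  have hdiff : Differentiable ℝ (iteratedDeriv n g) :=
    hg.differentiable_iteratedDeriv n (by exact_mod_cast Nat.lt_succ_self n)
  have hmvt := convex_univ.norm_image_sub_le_of_norm_deriv_le (fun z _ => hdiff z)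
    (fun z _ => by rw [← iteratedDeriv_succ]; exact hB z) (mem_univ t) (mem_univ (t - h))
  rw [iteratedDeriv_fun_sub (by fun_prop) (by fun_prop), iteratedDeriv_comp_sub_const]
  rwa [sub_sub_cancel_left, norm_neg, Real.norm_eq_abs] at hmvt

-- Each summation by parts trades a factor `L |e^{ix} - 1|` for a derivative of `g`.
lemma pow_mul_norm_trigSum_intCast_div_le (hL : 1 ≤ L) (n : ℕ) (hA : 0 ≤ A)
    (hgc : ContDiff ℝ n g) (hg : ∀ t, A < |t| → g t = 0)
    (hB : ∀ t, ‖iteratedDeriv n g t‖ ≤ B) (x : ℝ) :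
    (L * chord x) ^ n * ‖trigSum (fun m => g (m / L)) x‖ ≤ (2 * (A + n) + 1) * L * B := by
  have hL0 : 0 < L := one_pos.trans_le hL
  induction n generalizing A B g with
  | zero => simpa using norm_trigSum_intCast_div_le hL hA hg (by simpa using hB) x
  | succ n ih =>
    have hinv : |1 / L| = 1 / L := abs_of_pos (by positivity)
    have hdiff0 (t : ℝ) (ht : A + 1 < |t|) : g (t - 1 / L) - g t = 0 := by
      have hshift : |t| - 1 / L ≤ |t - 1 / L| := by
        simpa only [hinv] using abs_sub_abs_le_abs_sub t (1 / L)
      have hinv1 : 1 / L ≤ 1 := (div_le_one hL0).2 hL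
      rw [hg _ (by linarith), hg _ (by linarith), sub_zero]
    have hdiffB (t : ℝ) :
        ‖iteratedDeriv n (fun x => g (x - 1 / L) - g x) t‖ ≤ B * (1 / L) := by
      simpa only [hinv] using norm_iteratedDeriv_sub_le (by exact_mod_cast hgc) hB (1 / L) t
    have hgn : ContDiff ℝ n g := hgc.of_le (by exact_mod_cast Nat.le_succ n)
    have hstep := ih (add_nonneg hA zero_le_one) (by fun_prop) hdiff0 hdiffB
    have hparts := exp_sub_one_mul_trigSum (hasFiniteSupport_intCast_div hL0 hg) x
    simp only [Int.cast_sub, Int.cast_one, sub_div] at hparts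
    rw [← hparts, norm_mul, ← chord] at hstep
    calc (L * chord x) ^ (n + 1) * ‖trigSum (fun m => g (m / L)) x‖
        = L * ((L * chord x) ^ n * (chord x * ‖trigSum (fun m => g (m / L)) x‖)) := by ring
      _ ≤ L * ((2 * (A + 1 + n) + 1) * L * (B * (1 / L))) := by gcongr
      _ = (2 * (A + (n + 1 : ℕ)) + 1) * L * B := by
        push_cast
        field_simp
        ring

lemma exists_norm_iteratedDeriv_le {η : ℝ → ℂ} {n : ℕ} (hη : ContDiff ℝ n η)
    (hηc : HasCompactSupport η) : ∃ B, ∀ t, ‖iteratedDeriv n η t‖ ≤ B := by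
  simp_rw [← norm_iteratedFDeriv_eq_norm_iteratedDeriv]
  exact (hηc.iteratedFDeriv n).exists_bound_of_continuous (hη.continuous_iteratedFDeriv le_rfl)

lemma exists_norm_trigSum_mul_chordBracket_pow_le {η : ℝ → ℂ} {n : ℕ} (hη : ContDiff ℝ n η)
    (hηc : HasCompactSupport η) :
    ∃ C > (0 : ℝ), ∀ L, 1 ≤ L → ∀ x,
      ‖trigSum (fun m => η (m / L)) x‖ * chordBracket L x ^ n ≤ C * L := by
  obtain ⟨A, hA, hsupp⟩ := hηc.exists_pos_le_norm
  have hsupp' (t : ℝ) (ht : A < |t|) : η t = 0 := hsupp t ht.le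
  obtain ⟨B₀, hB₀⟩ := exists_norm_iteratedDeriv_le (hη.of_le (zero_le (a := (n : WithTop ℕ∞)))) hηc
  obtain ⟨B, hB⟩ := exists_norm_iteratedDeriv_le hη hηc
  have hB₀0 : 0 ≤ B₀ := (norm_nonneg _).trans (hB₀ 0)
  have hB0 : 0 ≤ B := (norm_nonneg _).trans (hB 0)
  refine ⟨2 ^ (n - 1) * ((2 * A + 1) * B₀ + (2 * (A + n) + 1) * B) + 1, by positivity,
    fun L hL x => ?_⟩
  have hlow := norm_trigSum_intCast_div_le hL hA.le hsupp' (by simpa using hB₀) x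
  have hhigh := pow_mul_norm_trigSum_intCast_div_le hL n hA.le hη hsupp' hB x
  set K := ‖trigSum (fun m => η (m / L)) x‖
  calc K * chordBracket L x ^ n ≤ K * (2 ^ (n - 1) * (1 ^ n + (L * chord x) ^ n)) := by
        gcongr
        exact add_pow_le zero_le_one (mul_nonneg (by linarith) (chord_nonneg x)) n
    _ = 2 ^ (n - 1) * (K + (L * chord x) ^ n * K) := by ring
    _ ≤ 2 ^ (n - 1) * ((2 * A + 1) * L * B₀ + (2 * (A + n) + 1) * L * B) := by gcongr
    _ ≤ (2 ^ (n - 1) * ((2 * A + 1) * B₀ + (2 * (A + n) + 1) * B) + 1) * L := by linarith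

end KernelDecay

section SchurTest

variable {α β : Type*} [MeasurableSpace α] [MeasurableSpace β] {μ : Measure α} {ν : Measure β}

lemma sq_lintegral_le_lintegral_mul_lintegral {f g h : α → ℝ≥0∞} (hg : AEMeasurable g μ)
    (hh : AEMeasurable h μ) (hf : ∀ x, f x ^ 2 ≤ g x * h x) :
    (∫⁻ x, f x ∂μ) ^ 2 ≤ (∫⁻ x, g x ∂μ) * ∫⁻ x, h x ∂μ := by
  have hhalf : (0 : ℝ) ≤ 2⁻¹ := by norm_num
  rw [← ENNReal.rpow_two, ← ENNReal.le_rpow_inv_iff two_pos, ENNReal.mul_rpow_of_nonneg _ _ hhalf]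
  refine (lintegral_mono fun x => ?_).trans
    (ENNReal.lintegral_mul_norm_pow_le hg hh hhalf hhalf (by norm_num))
  rw [← ENNReal.mul_rpow_of_nonneg _ _ hhalf, ENNReal.le_rpow_inv_iff two_pos, ENNReal.rpow_two]
  exact hf x

lemma lintegral_mul_sq_lintegral_le [SFinite μ] [SFinite ν] {k : α → β → ℝ≥0∞}
    (hk : Measurable (uncurry k)) {ρ : α → ℝ≥0∞} {w g H : β → ℝ≥0∞} (hρ : Measurable ρ)
    (hw : Measurable w) (hH : Measurable H) (hg : ∀ z, g z ^ 2 ≤ w z * H z) {A B : ℝ≥0∞}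
    (hA : ∀ y, ∫⁻ z, k y z * w z ∂ν ≤ A) (hB : ∀ z, ∫⁻ y, ρ y * k y z ∂μ ≤ B) :
    ∫⁻ y, ρ y * (∫⁻ z, k y z * g z ∂ν) ^ 2 ∂μ ≤ A * B * ∫⁻ z, H z ∂ν := by
  have hky (y : α) : Measurable (k y) := hk.of_uncurry_left
  have hcs (y : α) : (∫⁻ z, k y z * g z ∂ν) ^ 2 ≤ A * ∫⁻ z, k y z * H z ∂ν := by
    refine (sq_lintegral_le_lintegral_mul_lintegral ((hky y).mul hw).aemeasurable
      ((hky y).mul hH).aemeasurable fun z => ?_).trans (mul_le_mul_left (hA y) _)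
    calc (k y z * g z) ^ 2 = k y z ^ 2 * g z ^ 2 := mul_pow _ _ _
      _ ≤ k y z ^ 2 * (w z * H z) := by gcongr; exact hg z
      _ = k y z * w z * (k y z * H z) := by ring
  have hmeas : Measurable fun p : α × β => ρ p.1 * k p.1 p.2 * H p.2 := by fun_prop
  calc ∫⁻ y, ρ y * (∫⁻ z, k y z * g z ∂ν) ^ 2 ∂μ
      ≤ ∫⁻ y, A * ∫⁻ z, ρ y * k y z * H z ∂ν ∂μ := by
        refine lintegral_mono fun y => ?_
        have hout : ∫⁻ z, ρ y * k y z * H z ∂ν = ρ y * ∫⁻ z, k y z * H z ∂ν := by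
          simp_rw [mul_assoc]
          exact lintegral_const_mul _ (by fun_prop)
        rw [hout, mul_left_comm]
        gcongr
        exact hcs y
    _ = A * ∫⁻ z, (∫⁻ y, ρ y * k y z ∂μ) * H z ∂ν := by
        rw [lintegral_const_mul _ hmeas.lintegral_prod_right',
          lintegral_lintegral_swap hmeas.aemeasurable]
        refine congr_arg (A * ·) (lintegral_congr fun z => ?_)
        exact lintegral_mul_const (H z) (hρ.mul hk.of_uncurry_right)
    _ ≤ A * ∫⁻ z, B * H z ∂ν := by
        gcongr with z
        exact hB z
    _ = A * B * ∫⁻ z, H z ∂ν := by rw [lintegral_const_mul _ hH, mul_assoc]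

end SchurTest

lemma ofReal_mul_lintegral_comp_mul_left (f : ℝ → ℝ≥0∞) {c L : ℝ} (hc : 0 < c) (hL : 0 < L) :
    ENNReal.ofReal L * ∫⁻ x, f (c * L * x) = ENNReal.ofReal c⁻¹ * ∫⁻ x, f x := by
  have hcL : c * L ≠ 0 := by positivity
  have hmap := (Homeomorph.mulLeft₀ (c * L) hcL).measurableEmbedding.lintegral_map (μ := volume) f
  rw [Homeomorph.coe_mulLeft₀, Real.map_volume_mul_left hcL, lintegral_smul_measure,
    smul_eq_mul] at hmap
  rw [← hmap, ← mul_assoc, ← ENNReal.ofReal_mul hL.le, abs_of_pos (by positivity)]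
  congr 2
  field_simp

lemma setLIntegral_Ioc_comp_sub {f : ℝ → ℝ≥0∞} {T : ℝ} (hf : Periodic f T) (hT : 0 < T)
    (a z : ℝ) : ∫⁻ y in Ioc a (a + T), f (y - z) = ∫⁻ y in Ioc a (a + T), f y := by
  have hpre : Ioc a (a + T) = (· - z) ⁻¹' Ioc (a - z) (a - z + T) := by
    ext y
    simp [sub_add_eq_add_sub]
  rw [hpre, (measurePreserving_sub_right volume z).setLIntegral_comp_preimage_emb
    (MeasurableEquiv.subRight z).measurableEmbedding, ← hpre]
  exact (isAddFundamentalDomain_Ioc hT (a - z)).setLIntegral_eq (isAddFundamentalDomain_Ioc hT a)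
    f hf.map_vadd_zmultiples

lemma integrableOn_abs_rpow_neg {r : ℝ} (hr : r < 1) :
    IntegrableOn (fun u : ℝ => |u| ^ (-r)) (Icc (-1) 1) := by
  have hpos : IntervalIntegrable (fun u : ℝ => |u| ^ (-r)) volume 0 1 := by
    refine (intervalIntegral.intervalIntegrable_rpow' (r := -r) (by linarith)).congr fun u hu => ?_
    rw [uIoc_of_le zero_le_one] at hu
    simp only [abs_of_pos hu.1]
  have hneg : IntervalIntegrable (fun u : ℝ => |u| ^ (-r)) volume (-1) 0 := by
    simpa using ((IntervalIntegrable.iff_comp_neg (a := (0 : ℝ)) (b := 1)).1 hpos).symm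
  exact (intervalIntegrable_iff_integrableOn_Icc_of_le (by norm_num)).1 (hneg.trans hpos)

/-- The kernel `L (1 + L |e^{ix} - 1|)^{-p}`: a periodic bump of height `L` and width `1/L`. -/
def chordKernel (L p x : ℝ) : ℝ := L * chordBracket L x ^ (-p)

section ChordKernel

variable {L : ℝ}

lemma chordKernel_nonneg (hL : 0 ≤ L) (p x : ℝ) : 0 ≤ chordKernel L p x :=
  mul_nonneg hL (Real.rpow_nonneg (chordBracket_pos hL x).le _)

lemma chordKernel_neg (L p x : ℝ) : chordKernel L p (-x) = chordKernel L p x := by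
  rw [chordKernel, chordKernel, chordBracket_neg]

lemma continuous_chordKernel (hL : 0 ≤ L) (p : ℝ) : Continuous (chordKernel L p) :=
  continuous_const.mul (continuous_chordBracket_rpow hL (-p))

lemma chordKernel_periodic (L p : ℝ) : Periodic (chordKernel L p) (2 * π) := fun x => by
  rw [chordKernel, chordKernel, chordBracket_periodic]

lemma chordKernel_le (hL : 0 ≤ L) {p : ℝ} (hp : 0 ≤ p) (x : ℝ) : chordKernel L p x ≤ L :=
  mul_le_of_le_one_right hL
    (Real.rpow_le_one_of_one_le_of_nonpos (one_le_chordBracket hL x) (neg_nonpos.2 hp))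

lemma exists_setLIntegral_chordKernel_le {p : ℝ} (hp : 1 < p) :
    ∃ C : ℝ≥0∞, C ≠ ⊤ ∧ ∀ L, 0 < L → ∀ z,
      ∫⁻ y in Ioc (-π) π, ENNReal.ofReal (chordKernel L p (y - z)) ≤ C := by
  have hfin : ∫⁻ u : ℝ, ENNReal.ofReal ((1 + |u|) ^ (-p)) < ⊤ :=
    finite_integral_one_add_norm (by simpa using hp)
  refine ⟨ENNReal.ofReal (2 / π)⁻¹ * ∫⁻ u : ℝ, ENNReal.ofReal ((1 + |u|) ^ (-p)),
    ENNReal.mul_ne_top ENNReal.ofReal_ne_top hfin.ne, fun L hL z => ?_⟩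
  have htranslate := setLIntegral_Ioc_comp_sub (f := fun y => ENNReal.ofReal (chordKernel L p y))
    ((chordKernel_periodic L p).comp ENNReal.ofReal) Real.two_pi_pos (-π) z
  rw [show -π + 2 * π = π by ring] at htranslate
  rw [htranslate, ← ofReal_mul_lintegral_comp_mul_left _ (by positivity) hL,
    ← lintegral_const_mul' _ _ ENNReal.ofReal_ne_top]
  refine (setLIntegral_mono' measurableSet_Ioc fun y hy => ?_).trans (setLIntegral_le_lintegral _ _)
  rw [← ENNReal.ofReal_mul hL.le]
  refine ENNReal.ofReal_le_ofReal (mul_le_mul_of_nonneg_left ?_ hL.le)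
  exact Real.rpow_le_rpow_of_nonpos (by positivity)
    (one_add_abs_le_chordBracket hL.le (abs_le.2 ⟨hy.1.le, hy.2⟩)) (by linarith)

end ChordKernel

/-- A continuous positive weight squeezed between `L |e^{ix} - 1|` and `1 + L |e^{ix} - 1|`. The
instance of interest is `T ⟨d_τ⟩` with `L = T/τ`, whose value `T` at `0` may be arbitrarily small,
so that it need not be comparable to the upper bound. -/
structure IsChordWeight (L : ℝ) (V : ℝ → ℝ) : Prop where
  continuous : Continuous V
  pos : ∀ x, 0 < V x
  mul_chord_le : ∀ x, L * chord x ≤ V x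
  le_chordBracket : ∀ x, V x ≤ chordBracket L x

/-- The power `((1 + L |e^{ix} - 1|) / V)^r`, the price for replacing a weight `V` by the bracket
and the weight in Schur's test. -/
def schurWeight (L : ℝ) (V : ℝ → ℝ) (r x : ℝ) : ℝ := (chordBracket L x / V x) ^ r

namespace IsChordWeight

variable {L r e : ℝ} {V : ℝ → ℝ}

lemma continuous_rpow (hV : IsChordWeight L V) (e : ℝ) : Continuous fun x => V x ^ e :=
  hV.continuous.rpow_const fun x => Or.inl (hV.pos x).ne'

lemma chordBracket_pos (hV : IsChordWeight L V) (x : ℝ) : 0 < chordBracket L x :=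
  (hV.pos x).trans_le (hV.le_chordBracket x)

lemma one_le_div (hV : IsChordWeight L V) (x : ℝ) : 1 ≤ chordBracket L x / V x :=
  (_root_.one_le_div (hV.pos x)).2 (hV.le_chordBracket x)

lemma schurWeight_pos (hV : IsChordWeight L V) (r x : ℝ) : 0 < schurWeight L V r x :=
  Real.rpow_pos_of_pos (one_pos.trans_le (hV.one_le_div x)) r

lemma continuous_schurWeight (hV : IsChordWeight L V) (r : ℝ) :
    Continuous (schurWeight L V r) :=
  ((continuous_chordBracket L).div hV.continuous fun x => (hV.pos x).ne').rpow_const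
    fun x => Or.inl (one_pos.trans_le (hV.one_le_div x)).ne'

lemma chordBracket_rpow_le (hV : IsChordWeight L V) (he : e ≤ r) (x : ℝ) :
    chordBracket L x ^ e ≤ schurWeight L V r x * V x ^ e := by
  rw [← div_le_iff₀ (Real.rpow_pos_of_pos (hV.pos x) e),
    ← Real.div_rpow (hV.chordBracket_pos x).le (hV.pos x).le]
  exact Real.rpow_le_rpow_of_exponent_le (hV.one_le_div x) he

lemma rpow_le (hV : IsChordWeight L V) (he : -e ≤ r) (x : ℝ) :
    V x ^ e ≤ schurWeight L V r x * chordBracket L x ^ e := by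
  have hM := hV.chordBracket_pos x
  have h := hV.chordBracket_rpow_le he x
  rwa [Real.rpow_neg hM.le, Real.rpow_neg (hV.pos x).le, ← div_eq_mul_inv,
    inv_eq_one_div, div_le_div_iff₀ (Real.rpow_pos_of_pos hM e)
      (Real.rpow_pos_of_pos (hV.pos x) e), one_mul] at h

lemma schurWeight_le (hV : IsChordWeight L V) (hL : 0 < L) (hr0 : 0 ≤ r) (hr1 : r ≤ 1) {x : ℝ}
    (hx : |x| ≤ π) (hx0 : x ≠ 0) : schurWeight L V r x ≤ 1 + |2 / π * L * x| ^ (-r) := by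
  set u := 2 / π * L * x
  have hu : 0 < |u| := abs_pos.2 (by positivity)
  have huL : |u| ≤ L * chord x := by
    have := one_add_abs_le_chordBracket hL.le hx
    rwa [chordBracket, add_le_add_iff_left] at this
  have hratio : chordBracket L x / V x ≤ 1 + |u|⁻¹ :=
    calc chordBracket L x / V x ≤ chordBracket L x / (L * chord x) :=
          div_le_div_of_nonneg_left (hV.chordBracket_pos x).le (hu.trans_le huL)
            (hV.mul_chord_le x)
      _ = 1 + (L * chord x)⁻¹ := by
          rw [chordBracket, add_div, div_self (hu.trans_le huL).ne', one_div, add_comm]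
      _ ≤ 1 + |u|⁻¹ := by gcongr
  calc schurWeight L V r x ≤ (1 + |u|⁻¹) ^ r :=
        Real.rpow_le_rpow (zero_le_one.trans (hV.one_le_div x)) hratio hr0
    _ ≤ 1 ^ r + |u|⁻¹ ^ r := Real.rpow_add_le_add_rpow zero_le_one (by positivity) hr0 hr1
    _ = 1 + |u| ^ (-r) := by rw [Real.one_rpow, Real.inv_rpow hu.le, Real.rpow_neg hu.le]

lemma schurWeight_le_indicator (hV : IsChordWeight L V) (hL : 0 < L) (hr0 : 0 ≤ r) (hr1 : r ≤ 1)
    {x : ℝ} (hx : |x| ≤ π) (hx0 : x ≠ 0) :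
    ENNReal.ofReal (schurWeight L V r x) ≤
      2 + (Icc (-1) 1).indicator (fun u => ENNReal.ofReal (|u| ^ (-r))) (2 / π * L * x) := by
  have hle := ENNReal.ofReal_le_ofReal (hV.schurWeight_le hL hr0 hr1 hx hx0)
  rw [ENNReal.ofReal_add zero_le_one (by positivity), ENNReal.ofReal_one] at hle
  by_cases hu : 2 / π * L * x ∈ Icc (-1) 1
  · rw [indicator_of_mem hu]
    exact hle.trans (by gcongr; exact one_le_two)
  · rw [indicator_of_notMem hu, add_zero, ← one_add_one_eq_two]
    refine hle.trans (add_le_add le_rfl ?_)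
    exact ENNReal.ofReal_le_one.2 (Real.rpow_le_one_of_one_le_of_nonpos
      (not_le.1 fun h => hu (abs_le.1 h)).le (neg_nonpos.2 hr0))

end IsChordWeight

-- The singularity `|Lx|^{-r}` of the Schur weight is integrable and lives at the scale `1/L` of the
-- kernel, whence the uniformity in `L` and `V`.
lemma exists_setLIntegral_schurWeight_mul_chordKernel_le {r p : ℝ} (hr0 : 0 ≤ r) (hr1 : r < 1)
    (hp : 1 < p) :
    ∃ C : ℝ≥0∞, C ≠ ⊤ ∧ ∀ L, 0 < L → ∀ V, IsChordWeight L V → ∀ z,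
      ∫⁻ y in Ioc (-π) π, ENNReal.ofReal (schurWeight L V r y) *
        ENNReal.ofReal (chordKernel L p (y - z)) ≤ C := by
  obtain ⟨C, hC, hkernel⟩ := exists_setLIntegral_chordKernel_le hp
  set q : ℝ → ℝ≥0∞ := (Icc (-1) 1).indicator fun u => ENNReal.ofReal (|u| ^ (-r))
  have hq : ∫⁻ u, q u ≠ ⊤ := by
    rw [lintegral_indicator measurableSet_Icc]
    exact (integrableOn_abs_rpow_neg hr1).lintegral_lt_top.ne
  refine ⟨2 * C + ENNReal.ofReal (2 / π)⁻¹ * ∫⁻ u, q u, by finiteness, fun L hL V hV z => ?_⟩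
  set k : ℝ → ℝ≥0∞ := fun y => ENNReal.ofReal (chordKernel L p (y - z))
  have hk : Measurable k := by
    have := (continuous_chordKernel hL.le p).measurable
    fun_prop
  have hpointwise : ∀ᵐ y ∂volume.restrict (Ioc (-π) π),
      ENNReal.ofReal (schurWeight L V r y) * k y ≤
        2 * k y + ENNReal.ofReal L * q (2 / π * L * y) := by
    filter_upwards [ae_restrict_of_ae (Measure.ae_ne volume 0), ae_restrict_mem measurableSet_Ioc]
      with y hy0 hy
    have hweight := hV.schurWeight_le_indicator hL hr0 hr1.le (abs_le.2 ⟨hy.1.le, hy.2⟩) hy0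
    have hkL : k y ≤ ENNReal.ofReal L :=
      ENNReal.ofReal_le_ofReal (chordKernel_le hL.le (by linarith) _)
    calc ENNReal.ofReal (schurWeight L V r y) * k y ≤ (2 + q (2 / π * L * y)) * k y := by gcongr
      _ = 2 * k y + k y * q (2 / π * L * y) := by ring
      _ ≤ 2 * k y + ENNReal.ofReal L * q (2 / π * L * y) := by gcongr
  refine (lintegral_mono_ae hpointwise).trans ?_
  rw [lintegral_add_left (by fun_prop), lintegral_const_mul _ hk]
  gcongr
  · exact hkernel L hL z
  · rw [← ofReal_mul_lintegral_comp_mul_left q (by positivity) hL,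
      ← lintegral_const_mul' _ _ ENNReal.ofReal_ne_top]
    exact setLIntegral_le_lintegral _ _

section WeightedBound

variable {L K q r b b' : ℝ} {a c : ℤ → ℂ}

lemma chordKernel_mul_chordBracket_rpow (hL : 0 ≤ L) (q e x : ℝ) :
    chordKernel L q x * chordBracket L x ^ e = chordKernel L (q - e) x := by
  rw [chordKernel, chordKernel, mul_assoc, ← Real.rpow_add (chordBracket_pos hL x), neg_sub,
    neg_add_eq_sub]

lemma ofReal_chordBracket_rpow_mul_enorm_trigSum_mul_le (hL : 0 ≤ L) (ha : a.HasFiniteSupport)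
    (hc : c.HasFiniteSupport) (hK : ∀ x, ‖trigSum a x‖ ≤ K * chordKernel L q x) (b y : ℝ) :
    ENNReal.ofReal (chordBracket L y ^ b) * ‖trigSum (fun m => a m * c m) y‖ₑ ≤
      ENNReal.ofReal K * ∫⁻ z in Ioc (-π) π, ENNReal.ofReal (chordKernel L (q - |b|) (y - z)) *
        (ENNReal.ofReal (chordBracket L z ^ b) * ‖trigSum c z‖ₑ) := by
  have hpos (e x : ℝ) : 0 ≤ chordBracket L x ^ e := Real.rpow_nonneg (chordBracket_pos hL x).le e
  have hkernel (z : ℝ) : ENNReal.ofReal (chordBracket L y ^ b) * ‖trigSum a (y - z)‖ₑ ≤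
      ENNReal.ofReal K * (ENNReal.ofReal (chordKernel L (q - |b|) (y - z)) *
        ENNReal.ofReal (chordBracket L z ^ b)) := by
    rw [← ofReal_norm, ← ENNReal.ofReal_mul (hpos b y),
      ← ENNReal.ofReal_mul (chordKernel_nonneg hL _ _),
      ← ENNReal.ofReal_mul' (mul_nonneg (chordKernel_nonneg hL _ _) (hpos b z))]
    refine ENNReal.ofReal_le_ofReal ?_
    calc chordBracket L y ^ b * ‖trigSum a (y - z)‖
        ≤ chordBracket L z ^ b * chordBracket L (y - z) ^ |b| *
            (K * chordKernel L q (y - z)) :=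
          mul_le_mul (chordBracket_rpow_le hL b y z) (hK _) (norm_nonneg _)
            (mul_nonneg (hpos b z) (hpos _ _))
      _ = K * (chordKernel L (q - |b|) (y - z) * chordBracket L z ^ b) := by
          rw [← chordKernel_mul_chordBracket_rpow hL]
          ring
  calc ENNReal.ofReal (chordBracket L y ^ b) * ‖trigSum (fun m => a m * c m) y‖ₑ
      ≤ ENNReal.ofReal (chordBracket L y ^ b) *
          ∫⁻ z in Ioc (-π) π, ‖trigSum a (y - z)‖ₑ * ‖trigSum c z‖ₑ := by
        gcongr
        exact enorm_trigSum_mul_le ha hc y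
    _ = ∫⁻ z in Ioc (-π) π, ENNReal.ofReal (chordBracket L y ^ b) *
          (‖trigSum a (y - z)‖ₑ * ‖trigSum c z‖ₑ) :=
        (lintegral_const_mul' _ _ ENNReal.ofReal_ne_top).symm
    _ ≤ ∫⁻ z in Ioc (-π) π, ENNReal.ofReal K *
          (ENNReal.ofReal (chordKernel L (q - |b|) (y - z)) *
            (ENNReal.ofReal (chordBracket L z ^ b) * ‖trigSum c z‖ₑ)) := by
        refine lintegral_mono fun z => ?_
        have := mul_le_mul_left (hkernel z) ‖trigSum c z‖ₑ
        simpa only [mul_assoc] using this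
    _ = _ := lintegral_const_mul' _ _ ENNReal.ofReal_ne_top

lemma IsChordWeight.sq_ofReal_chordBracket_rpow_le {V : ℝ → ℝ} (hV : IsChordWeight L V)
    (hr : 2 * b ≤ r) (x : ℝ) :
    ENNReal.ofReal (chordBracket L x ^ b) ^ 2 ≤
      ENNReal.ofReal (schurWeight L V r x) * ENNReal.ofReal (V x ^ (2 * b)) := by
  have hM := (hV.chordBracket_pos x).le
  rw [← ENNReal.ofReal_pow (Real.rpow_nonneg hM b), ← Real.rpow_mul_natCast hM, Nat.cast_two,
    mul_comm b, ← ENNReal.ofReal_mul (hV.schurWeight_pos r x).le]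
  exact ENNReal.ofReal_le_ofReal (hV.chordBracket_rpow_le hr x)

lemma IsChordWeight.ofReal_rpow_le {V : ℝ → ℝ} (hV : IsChordWeight L V) (hL : 0 ≤ L)
    (hbb : b' ≤ b) (hr : -(2 * b') ≤ r) (x : ℝ) :
    ENNReal.ofReal (V x ^ (2 * b')) ≤
      ENNReal.ofReal (schurWeight L V r x) * ENNReal.ofReal (chordBracket L x ^ b) ^ 2 := by
  have hM := (hV.chordBracket_pos x).le
  rw [← ENNReal.ofReal_pow (Real.rpow_nonneg hM b), ← Real.rpow_mul_natCast hM, Nat.cast_two,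
    mul_comm b, ← ENNReal.ofReal_mul (hV.schurWeight_pos r x).le]
  refine ENNReal.ofReal_le_ofReal ((hV.rpow_le hr x).trans ?_)
  refine mul_le_mul_of_nonneg_left ?_ (hV.schurWeight_pos r x).le
  exact Real.rpow_le_rpow_of_exponent_le (one_le_chordBracket hL x) (by linarith)

lemma setLIntegral_rpow_mul_sq_enorm_trigSum_mul_le (hL : 0 ≤ L) {V : ℝ → ℝ}
    (hV : IsChordWeight L V) (ha : a.HasFiniteSupport) (hc : c.HasFiniteSupport)
    (hK : ∀ x, ‖trigSum a x‖ ≤ K * chordKernel L q x) (hbb : b' ≤ b) (hr : 2 * b ≤ r)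
    (hr' : -(2 * b') ≤ r) {B : ℝ≥0∞}
    (hB : ∀ z, ∫⁻ y in Ioc (-π) π, ENNReal.ofReal (schurWeight L V r y) *
      ENNReal.ofReal (chordKernel L (q - |b|) (y - z)) ≤ B) :
    ∫⁻ y in Ioc (-π) π, ENNReal.ofReal (V y ^ (2 * b')) * ‖trigSum (fun m => a m * c m) y‖ₑ ^ 2 ≤
      B * B * ENNReal.ofReal K ^ 2 *
        ∫⁻ y in Ioc (-π) π, ENNReal.ofReal (V y ^ (2 * b)) * ‖trigSum c y‖ₑ ^ 2 := by
  set ρ : ℝ → ℝ≥0∞ := fun y => ENNReal.ofReal (schurWeight L V r y)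
  set k : ℝ → ℝ → ℝ≥0∞ := fun y z => ENNReal.ofReal (chordKernel L (q - |b|) (y - z))
  set g : ℝ → ℝ≥0∞ := fun z => ENNReal.ofReal (chordBracket L z ^ b) * ‖trigSum c z‖ₑ
  have hρ : Measurable ρ := (hV.continuous_schurWeight r).measurable.ennreal_ofReal
  have hk : Measurable (uncurry k) :=
    ((continuous_chordKernel hL _).comp continuous_sub).measurable.ennreal_ofReal
  have hH : Measurable fun z => ENNReal.ofReal (V z ^ (2 * b)) * ‖trigSum c z‖ₑ ^ 2 :=
    (hV.continuous_rpow _).measurable.ennreal_ofReal.mul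
      ((continuous_trigSum hc).measurable.enorm.pow_const 2)
  have hg (z : ℝ) : g z ^ 2 ≤ ρ z * (ENNReal.ofReal (V z ^ (2 * b)) * ‖trigSum c z‖ₑ ^ 2) := by
    rw [mul_pow, ← mul_assoc]
    exact mul_le_mul_left (hV.sq_ofReal_chordBracket_rpow_le hr z) _
  have hrow (y : ℝ) : ∫⁻ z in Ioc (-π) π, k y z * ρ z ≤ B := by
    refine (lintegral_congr fun z => ?_).trans_le (hB y)
    rw [mul_comm, ← chordKernel_neg L _ (z - y), neg_sub]
  calc ∫⁻ y in Ioc (-π) π,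
        ENNReal.ofReal (V y ^ (2 * b')) * ‖trigSum (fun m => a m * c m) y‖ₑ ^ 2
      ≤ ∫⁻ y in Ioc (-π) π,
          ENNReal.ofReal K ^ 2 * (ρ y * (∫⁻ z in Ioc (-π) π, k y z * g z) ^ 2) := by
        refine lintegral_mono fun y => (mul_le_mul_left (hV.ofReal_rpow_le hL hbb hr' y) _).trans ?_
        rw [mul_assoc, ← mul_pow, mul_left_comm, ← mul_pow]
        exact mul_le_mul_right (pow_le_pow_left'
          (ofReal_chordBracket_rpow_mul_enorm_trigSum_mul_le hL ha hc hK b y) 2) _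
    _ = ENNReal.ofReal K ^ 2 *
          ∫⁻ y in Ioc (-π) π, ρ y * (∫⁻ z in Ioc (-π) π, k y z * g z) ^ 2 :=
        lintegral_const_mul' _ _ (by finiteness)
    _ ≤ ENNReal.ofReal K ^ 2 * (B * B *
          ∫⁻ y in Ioc (-π) π, ENNReal.ofReal (V y ^ (2 * b)) * ‖trigSum c y‖ₑ ^ 2) := by
        gcongr
        exact lintegral_mul_sq_lintegral_le hk hρ hρ hH hg hrow hB
    _ = _ := by ring

lemma exists_setLIntegral_rpow_mul_sq_enorm_trigSum_mul_le (hb' : -(1 / 2) < b') (hbb : b' ≤ b)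
    (hb : b < 1 / 2) (hq : 1 + |b| < q) :
    ∃ C : ℝ≥0∞, C ≠ ⊤ ∧ ∀ L, 0 < L → ∀ V, IsChordWeight L V → ∀ a c : ℤ → ℂ,
      a.HasFiniteSupport → c.HasFiniteSupport → ∀ K,
      (∀ x, ‖trigSum a x‖ ≤ K * chordKernel L q x) →
      ∫⁻ y in Ioc (-π) π, ENNReal.ofReal (V y ^ (2 * b')) * ‖trigSum (fun m => a m * c m) y‖ₑ ^ 2 ≤
        C * ENNReal.ofReal K ^ 2 *
          ∫⁻ y in Ioc (-π) π, ENNReal.ofReal (V y ^ (2 * b)) * ‖trigSum c y‖ₑ ^ 2 := by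
  set r := max (2 * b) (-(2 * b'))
  have hr0 : 0 ≤ r := by
    rcases le_total 0 b with h | h
    · exact le_max_of_le_left (by linarith)
    · exact le_max_of_le_right (by linarith)
  have hr1 : r < 1 := max_lt (by linarith) (by linarith)
  obtain ⟨B, hB, hschur⟩ := exists_setLIntegral_schurWeight_mul_chordKernel_le hr0 hr1
    (lt_sub_iff_add_lt.2 hq)
  exact ⟨B * B, by finiteness, fun L hL V hV a c ha hc K hK =>
    setLIntegral_rpow_mul_sq_enorm_trigSum_mul_le hL.le hV ha hc hK hbb (le_max_left _ _)
      (le_max_right _ _) (hschur L hL V hV)⟩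

lemma ofReal_setIntegral_rpow_mul_sq_norm_trigSum {V : ℝ → ℝ} (hV : IsChordWeight L V)
    (hc : c.HasFiniteSupport) (e : ℝ) :
    ENNReal.ofReal (∫ y in Ioc (-π) π, V y ^ e * ‖trigSum c y‖ ^ 2) =
      ∫⁻ y in Ioc (-π) π, ENNReal.ofReal (V y ^ e) * ‖trigSum c y‖ₑ ^ 2 := by
  have hnonneg (y : ℝ) : 0 ≤ V y ^ e := Real.rpow_nonneg (hV.pos y).le e
  have hcont : Continuous fun y => V y ^ e * ‖trigSum c y‖ ^ 2 :=
    (hV.continuous_rpow e).mul ((continuous_trigSum hc).norm.pow 2)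
  rw [ofReal_integral_eq_lintegral_ofReal hcont.integrableOn_Ioc
    (ae_of_all _ fun y => mul_nonneg (hnonneg y) (sq_nonneg _))]
  exact lintegral_congr fun y => by
    rw [ENNReal.ofReal_mul (hnonneg y), ENNReal.ofReal_pow (norm_nonneg _), ofReal_norm]

lemma exists_norm_trigSum_intCast_div_le_chordKernel {η : ℝ → ℂ} {n : ℕ} (hη : ContDiff ℝ n η)
    (hηc : HasCompactSupport η) :
    ∃ K > 0, ∀ L, 1 ≤ L → ∀ x, ‖trigSum (fun m => η (m / L)) x‖ ≤ K * chordKernel L n x := by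
  obtain ⟨K, hK, hdecay⟩ := exists_norm_trigSum_mul_chordBracket_pow_le hη hηc
  refine ⟨K, hK, fun L hL x => ?_⟩
  have hM := chordBracket_pos (zero_le_one.trans hL) x
  rw [chordKernel, Real.rpow_neg hM.le, Real.rpow_natCast, ← mul_assoc, ← div_eq_mul_inv,
    le_div_iff₀ (pow_pos hM n)]
  exact hdecay L hL x

lemma exists_setIntegral_rpow_mul_sq_norm_trigSum_mul_le {η : ℝ → ℂ} (hη : ContDiff ℝ 2 η)
    (hηc : HasCompactSupport η) (hb' : -(1 / 2) < b') (hbb : b' ≤ b) (hb : b < 1 / 2) :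
    ∃ C > 0, ∀ L, 1 ≤ L → ∀ V, IsChordWeight L V → ∀ c : ℤ → ℂ, c.HasFiniteSupport →
      ∫ y in Ioc (-π) π, V y ^ (2 * b') * ‖trigSum (fun m => η (m / L) * c m) y‖ ^ 2 ≤
        C * ∫ y in Ioc (-π) π, V y ^ (2 * b) * ‖trigSum c y‖ ^ 2 := by
  have hq : 1 + |b| < ((2 : ℕ) : ℝ) := by
    rw [Nat.cast_two]
    linarith [abs_lt.2 ⟨hb'.trans_le hbb, hb⟩]
  obtain ⟨K, hK, hdecay⟩ := exists_norm_trigSum_intCast_div_le_chordKernel (n := 2) hη hηc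
  obtain ⟨B, hB, hbound⟩ := exists_setLIntegral_rpow_mul_sq_enorm_trigSum_mul_le hb' hbb hb hq
  obtain ⟨A, -, hsupp⟩ := hηc.exists_pos_le_norm
  refine ⟨B.toReal * K ^ 2 + 1, by positivity, fun L hL V hV c hc => ?_⟩
  have ha := hasFiniteSupport_intCast_div (one_pos.trans_le hL) fun t ht => hsupp t (le_of_lt ht)
  have hac : (fun m : ℤ => η (m / L) * c m).HasFiniteSupport := ha.mul_left c
  have hle := hbound L (one_pos.trans_le hL) V hV _ c ha hc K (hdecay L hL)
  rw [← ofReal_setIntegral_rpow_mul_sq_norm_trigSum hV hac,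
    ← ofReal_setIntegral_rpow_mul_sq_norm_trigSum hV hc, ← ENNReal.ofReal_toReal hB,
    ← ENNReal.ofReal_pow hK.le, ← ENNReal.ofReal_mul ENNReal.toReal_nonneg,
    ← ENNReal.ofReal_mul (by positivity)] at hle
  have hnonneg : 0 ≤ ∫ y in Ioc (-π) π, V y ^ (2 * b) * ‖trigSum c y‖ ^ 2 :=
    integral_nonneg fun y => mul_nonneg (Real.rpow_nonneg (hV.pos y).le _) (sq_nonneg _)
  rw [ENNReal.ofReal_le_ofReal_iff (by positivity)] at hle
  exact hle.trans (mul_le_mul_of_nonneg_right (by linarith) hnonneg)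

end WeightedBound

section JapaneseBracket

lemma one_le_jbr (x : ℝ) : 1 ≤ jbr x :=
  Real.one_le_sqrt.2 (le_add_of_nonneg_right (sq_nonneg x))

lemma jbr_pos (x : ℝ) : 0 < jbr x := one_pos.trans_le (one_le_jbr x)

@[fun_prop]
lemma continuous_jbr : Continuous jbr := by
  unfold jbr
  fun_prop

lemma jbr_le_jbr {x y : ℝ} (hx : 0 ≤ x) (hxy : x ≤ y) : jbr x ≤ jbr y := by
  unfold jbr
  gcongr

lemma le_jbr (x : ℝ) : x ≤ jbr x := Real.le_sqrt_of_sq_le (by linarith)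

lemma jbr_le_one_add {x : ℝ} (hx : 0 ≤ x) : jbr x ≤ 1 + x :=
  Real.sqrt_le_iff.2 ⟨by positivity, by nlinarith⟩

end JapaneseBracket

section Modes

variable {τ s b : ℝ} {a : ℤ → ℂ} {u : ℤ → Torus → ℂ}

lemma norm_dtau (hτ : 0 < τ) (σ : ℝ) : ‖dtau τ σ‖ = chord (τ * σ) / τ := by
  rw [dtau, norm_div, norm_real, Real.norm_of_nonneg hτ.le, chord]
  push_cast
  rw [mul_assoc]

@[fun_prop]
lemma continuous_dtau (τ : ℝ) : Continuous (dtau τ) := by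
  unfold dtau
  fun_prop

lemma isChordWeight_mul_jbr {T : ℝ} (hτ : 0 < τ) (hT : 0 < T) (hT1 : T ≤ 1) :
    IsChordWeight (T / τ) fun x => T * jbr (chord x / τ) where
  continuous := by fun_prop
  pos x := mul_pos hT (jbr_pos _)
  mul_chord_le x := by
    rw [div_mul_eq_mul_div, mul_div_assoc]
    exact mul_le_mul_of_nonneg_left (le_jbr _) hT.le
  le_chordBracket x := by
    have hx : 0 ≤ chord x / τ := div_nonneg (chord_nonneg x) hτ.le
    rw [chordBracket, div_mul_eq_mul_div, mul_div_assoc]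
    nlinarith [jbr_le_one_add hx]

/-- The density at time frequency `σ` of the squared `X^{0,b}_τ` norm of a single Fourier mode with
time coefficients `a` and dispersion `θ`; in the Schrödinger case `θ = k²`. -/
def modeDensity (τ b θ : ℝ) (a : ℤ → ℂ) (σ : ℝ) : ℝ :=
  jbr ‖dtau τ (σ - θ)‖ ^ (2 * b) * ‖(τ : ℂ) * trigSum a (τ * σ)‖ ^ 2

/-- The squared `X^{0,b}_τ` norm of a single Fourier mode with time coefficients `a` and dispersion
`θ`. -/
def modeEnergy (τ b θ : ℝ) (a : ℤ → ℂ) : ℝ :=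
  ∫ σ in Ioc (-(π / τ)) (π / τ), modeDensity τ b θ a σ

lemma modeDensity_nonneg (τ b θ : ℝ) (a : ℤ → ℂ) (σ : ℝ) : 0 ≤ modeDensity τ b θ a σ :=
  mul_nonneg (Real.rpow_nonneg (jbr_pos _).le _) (sq_nonneg _)

lemma integrableOn_modeDensity (τ b θ : ℝ) (ha : a.HasFiniteSupport) :
    IntegrableOn (modeDensity τ b θ a) (Ioc (-(π / τ)) (π / τ)) := by
  have hsum := continuous_trigSum ha
  have hweight : Continuous fun σ => jbr ‖dtau τ (σ - θ)‖ ^ (2 * b) :=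
    (show Continuous fun σ => jbr ‖dtau τ (σ - θ)‖ by fun_prop).rpow_const
      fun σ => Or.inl (jbr_pos _).ne'
  exact (hweight.mul (by fun_prop)).integrableOn_Ioc

lemma modeEnergy_eq (hτ : 0 < τ) (b θ : ℝ) (a : ℤ → ℂ) :
    modeEnergy τ b θ a = τ * ∫ x in Ioc (-π) π, jbr (chord x / τ) ^ (2 * b) *
      ‖trigSum (fun m => a m * exp (I * m * (τ * θ : ℝ))) x‖ ^ 2 := by
  set h : ℝ → ℝ := fun x => jbr (chord x / τ) ^ (2 * b) *
    ‖trigSum (fun m => a m * exp (I * m * (τ * θ : ℝ))) x‖ ^ 2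
  have hdensity (σ : ℝ) : modeDensity τ b θ a σ = τ ^ 2 * h (τ * σ - τ * θ) := by
    simp only [modeDensity, h, trigSum_mul_exp, sub_add_cancel, norm_dtau hτ, norm_mul, norm_real,
      Real.norm_of_nonneg hτ.le, mul_sub]
    ring
  have hperiodic : Periodic h (2 * π) := fun x => by
    simp only [h, chord_periodic x, trigSum_periodic _ x]
  have hshift := hperiodic.intervalIntegral_add_eq (-π - τ * θ) (-π)
  rw [show -π - τ * θ + 2 * π = π - τ * θ by ring, show -π + 2 * π = π by ring] at hshift
  have hπ : 0 < π / τ := by positivity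
  change modeEnergy τ b θ a = τ * ∫ x in Ioc (-π) π, h x
  simp_rw [modeEnergy, hdensity]
  rw [← intervalIntegral.integral_of_le (by linarith),
    ← intervalIntegral.integral_of_le (by linarith [Real.pi_pos]),
    intervalIntegral.integral_const_mul, intervalIntegral.integral_comp_mul_sub h hτ.ne',
    mul_neg, mul_div_cancel₀ _ hτ.ne', hshift, smul_eq_mul, ← mul_assoc]
  field_simp

lemma modeDensity_le (hτ : 0 < τ) (b θ : ℝ) {F : Finset ℤ} (ha : support a ⊆ F) (σ : ℝ) :
    modeDensity τ b θ a σ ≤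
      jbr (2 / τ) ^ (2 * |b|) * τ ^ 2 * F.card * ∑ m ∈ F, ‖a m‖ ^ 2 := by
  have hdtau : ‖dtau τ (σ - θ)‖ ≤ 2 / τ := by
    rw [norm_dtau hτ]
    gcongr
    exact chord_le_two _
  have hweight : jbr ‖dtau τ (σ - θ)‖ ^ (2 * b) ≤ jbr (2 / τ) ^ (2 * |b|) :=
    calc jbr ‖dtau τ (σ - θ)‖ ^ (2 * b) ≤ jbr ‖dtau τ (σ - θ)‖ ^ (2 * |b|) :=
          Real.rpow_le_rpow_of_exponent_le (one_le_jbr _) (by linarith [le_abs_self b])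
      _ ≤ jbr (2 / τ) ^ (2 * |b|) :=
          Real.rpow_le_rpow (jbr_pos _).le (jbr_le_jbr (norm_nonneg _) hdtau) (by positivity)
  have hsum : ‖trigSum a (τ * σ)‖ ^ 2 ≤ F.card * ∑ m ∈ F, ‖a m‖ ^ 2 :=
    (pow_le_pow_left₀ (norm_nonneg _) (norm_trigSum_le ha _) 2).trans sq_sum_le_card_mul_sum_sq
  rw [modeDensity, norm_mul, mul_pow, norm_real, Real.norm_of_nonneg hτ.le, mul_assoc,
    mul_assoc]
  have := Real.rpow_nonneg (jbr_pos (2 / τ)).le (2 * |b|)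
  gcongr

lemma modeEnergy_le (hτ : 0 < τ) (b θ : ℝ) {F : Finset ℤ} (ha : support a ⊆ F) :
    modeEnergy τ b θ a ≤ volume.real (Ioc (-(π / τ)) (π / τ)) *
      (jbr (2 / τ) ^ (2 * |b|) * τ ^ 2 * F.card * ∑ m ∈ F, ‖a m‖ ^ 2) := by
  rw [← smul_eq_mul, ← setIntegral_const]
  exact setIntegral_mono (integrableOn_modeDensity τ b θ (F.finite_toSet.subset ha))
    continuous_const.integrableOn_Ioc (modeDensity_le hτ b θ ha)

lemma exists_modeEnergy_mul_le {η : ℝ → ℂ} (hη : ContDiff ℝ 2 η) (hηc : HasCompactSupport η)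
    {b b' : ℝ} (hb' : -(1 / 2) < b') (hbb : b' ≤ b) (hb : b < 1 / 2) :
    ∃ C > 0, ∀ τ T, 0 < τ → τ ≤ T → T ≤ 1 → ∀ θ, ∀ a : ℤ → ℂ, a.HasFiniteSupport →
      modeEnergy τ b' θ (fun m => η (m * τ / T) * a m) ≤
        C * (T ^ (b - b')) ^ 2 * modeEnergy τ b θ a := by
  obtain ⟨C, hC, hbound⟩ := exists_setIntegral_rpow_mul_sq_norm_trigSum_mul_le hη hηc hb' hbb hb
  refine ⟨C, hC, fun τ T hτ hτT hT1 θ a ha => ?_⟩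
  have hT : 0 < T := hτ.trans_le hτT
  have hle := hbound (T / τ) ((one_le_div hτ).2 hτT) _ (isChordWeight_mul_jbr hτ hT hT1)
    (fun m => a m * exp (I * m * (τ * θ : ℝ))) (ha.mul_left _)
  simp_rw [Real.mul_rpow hT.le (jbr_pos _).le, mul_assoc (T ^ (2 * b)),
    mul_assoc (T ^ (2 * b')), integral_const_mul, ← mul_assoc (η _), div_div_eq_mul_div] at hle
  have hpow : T ^ (2 * b) = T ^ (2 * b') * (T ^ (b - b')) ^ 2 := by
    rw [← Real.rpow_mul_natCast hT.le, ← Real.rpow_add hT]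
    congr 1
    push_cast
    ring
  rw [modeEnergy_eq hτ, modeEnergy_eq hτ]
  refine le_of_mul_le_mul_left ?_ (Real.rpow_pos_of_pos hT (2 * b'))
  calc _ = τ * (T ^ (2 * b') * _) := mul_left_comm _ _ _
    _ ≤ τ * (C * (T ^ (2 * b) * _)) := mul_le_mul_of_nonneg_left hle hτ.le
    _ = _ := by
        rw [hpow]
        ring

lemma support_fourierCoeff_subset (u : ℤ → Torus → ℂ) (k : ℤ) :
    support (fun m => fourierCoeff (u m) k) ⊆ support u :=
  fun m hm hum => hm (by simp [hum, fourierCoeff])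

lemma summable_modeEnergy (hτ : 0 < τ) (b : ℝ) (hu : ∀ n, InHs s (u n))
    (hfin : u.HasFiniteSupport) :
    Summable fun k : ℤ => jbr k ^ (2 * s) *
      modeEnergy τ b ((k : ℝ) ^ 2) fun m => fourierCoeff (u m) k := by
  obtain ⟨F, hF⟩ := Set.Finite.exists_finset_coe hfin
  have hnonneg (k : ℤ) : 0 ≤ jbr k ^ (2 * s) := Real.rpow_nonneg (jbr_pos _).le _
  refine Summable.of_nonneg_of_le
    (fun k => mul_nonneg (hnonneg k) (integral_nonneg (modeDensity_nonneg τ b _ _)))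
    (fun k => mul_le_mul_of_nonneg_left (modeEnergy_le hτ b _
      (hF ▸ support_fourierCoeff_subset u k)) (hnonneg k)) ?_
  refine ((summable_sum fun m (_ : m ∈ F) => (hu m).2).mul_left
    (volume.real (Ioc (-(π / τ)) (π / τ)) * (jbr (2 / τ) ^ (2 * |b|) * τ ^ 2 * F.card))).congr
      fun k => ?_
  rw [← Finset.mul_sum]
  ring

lemma XdNorm_eq_sqrt_tsum_modeEnergy (hτ : 0 < τ) (b : ℝ) (hu : ∀ n, InHs s (u n))
    (hfin : u.HasFiniteSupport) :
    XdNorm τ s b u = √(∑' k : ℤ, jbr k ^ (2 * s) *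
      modeEnergy τ b ((k : ℝ) ^ 2) fun m => fourierCoeff (u m) k) := by
  have hdensity (σ : ℝ) (k : ℤ) : jbr k ^ (2 * s) * jbr ‖dtau τ (σ - (k : ℝ) ^ 2)‖ ^ (2 * b) *
      ‖(τ : ℂ) * ∑' m : ℤ, fourierCoeff (u m) k * exp (I * m * τ * σ)‖ ^ 2 =
        jbr k ^ (2 * s) * modeDensity τ b ((k : ℝ) ^ 2) (fun m => fourierCoeff (u m) k) σ := by
    simp only [modeDensity, trigSum, ofReal_mul, mul_assoc]
  simp_rw [XdNorm, hdensity, modeEnergy, ← integral_const_mul]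
  congr 1
  refine (integral_tsum_of_summable_integral_norm (fun k => ?_) ?_).symm
  · exact (integrableOn_modeDensity τ b _
      (Set.Finite.subset hfin (support_fourierCoeff_subset u k))).const_mul _
  · refine (summable_modeEnergy hτ b hu hfin).congr fun k => ?_
    rw [modeEnergy, ← integral_const_mul]
    refine integral_congr_ae (ae_of_all _ fun σ => (Real.norm_of_nonneg ?_).symm)
    exact mul_nonneg (Real.rpow_nonneg (jbr_pos _).le _) (modeDensity_nonneg _ _ _ _ _)

lemma InHs.const_mul {f : Torus → ℂ} (hf : InHs s f) (c : ℂ) : InHs s fun x => c * f x := by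
  refine ⟨hf.1.const_mul c, (hf.2.mul_left (‖c‖ ^ 2)).congr fun k => ?_⟩
  rw [fourierCoeff.const_mul, norm_mul]
  ring

end Modes

theorem discrete_bourgain_rescaled_cutoff_general (η : ℝ → ℂ) (hη : ContDiff ℝ 2 η)
    (hηc : HasCompactSupport η) (b b' : ℝ)
    (hb'l : -(1 / 2 : ℝ) < b') (hbb : b' ≤ b) (hbu : b < 1 / 2) :
    ∃ C > (0 : ℝ), ∀ s τ T : ℝ, 0 < τ → τ ≤ T → T ≤ 1 →
      ∀ u : ℤ → Torus → ℂ, (∀ n, InHs s (u n)) → {n : ℤ | u n ≠ 0}.Finite →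
      XdNorm τ s b' (fun n x => η (n * τ / T) * u n x)
        ≤ C * T ^ (b - b') * XdNorm τ s b u := by
  obtain ⟨C, hC, hmode⟩ := exists_modeEnergy_mul_le hη hηc hb'l hbb hbu
  refine ⟨√C, Real.sqrt_pos.2 hC, fun s τ T hτ hτT hT1 u hu hfin => ?_⟩
  have hTpow : 0 ≤ T ^ (b - b') := Real.rpow_nonneg (hτ.le.trans hτT) _
  have hcut (n : ℤ) : InHs s fun x => η (n * τ / T) * u n x := (hu n).const_mul _
  have hcutfin : HasFiniteSupport fun (n : ℤ) x => η (n * τ / T) * u n x :=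
    hfin.subset fun n hn hun => hn (funext fun x => by simp [hun])
  have hsummable := (summable_modeEnergy hτ b hu hfin).mul_left (C * (T ^ (b - b')) ^ 2)
  rw [XdNorm_eq_sqrt_tsum_modeEnergy hτ b hu hfin,
    XdNorm_eq_sqrt_tsum_modeEnergy hτ b' hcut hcutfin,
    ← Real.sqrt_sq hTpow, ← Real.sqrt_mul hC.le, ← Real.sqrt_mul (by positivity), ← tsum_mul_left]
  refine Real.sqrt_le_sqrt ((summable_modeEnergy hτ b' hcut hcutfin).tsum_le_tsum (fun k => ?_)
    hsummable)
  simp_rw [fourierCoeff.const_mul]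
  rw [mul_left_comm]
  exact mul_le_mul_of_nonneg_left (hmode τ T hτ hτT hT1 _ _
    (hfin.subset (support_fourierCoeff_subset u k))) (Real.rpow_nonneg (jbr_pos _).le _)

/-- Gain `T^{b-b'}` from a rescaled time cutoff `η(nτ/T)`, `T = Nτ ≤ 1`,
for `-1/2 < b' ≤ b < 1/2`. -/
theorem discrete_bourgain_rescaled_cutoff (η : ℝ → ℝ) (hη : ContDiff ℝ (⊤ : ℕ∞) η)
    (hηc : HasCompactSupport η) (s b b' : ℝ)
    (hb'l : -(1 / 2 : ℝ) < b') (hbb : b' ≤ b) (hbu : b < 1 / 2) :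
    ∃ C > (0 : ℝ), ∀ τ ∈ Set.Ioc (0 : ℝ) 1, ∀ N : ℕ, 1 ≤ N → (N : ℝ) * τ ≤ 1 →
      ∀ u : ℤ → Torus → ℂ, (∀ n, InHs s (u n)) → {n : ℤ | u n ≠ 0}.Finite →
      XdNorm τ s b' (fun n x => (η ((n : ℝ) * τ / ((N : ℝ) * τ)) : ℂ) * u n x)
        ≤ C * ((N : ℝ) * τ) ^ (b - b') * XdNorm τ s b u := by
  obtain ⟨C, hC, hbound⟩ := discrete_bourgain_rescaled_cutoff_general (fun t => (η t : ℂ))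
    (ofRealCLM.contDiff.comp (hη.of_le ENat.LEInfty.out))
    (hηc.comp_left ofReal_zero) b b' hb'l hbb hbu
  exact ⟨C, hC, fun τ hτ N hN hNτ => hbound s τ (N * τ) hτ.1
    (le_mul_of_one_le_left hτ.1.le (by exact_mod_cast hN)) hNτ⟩
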